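/- arXiv:2205.09621 — 2 statements merged into one kernel-verified Lean document; each statement's English description precedes it below -/
import Mathlib

section
/- Let G : [0,∞) → [0,∞) be a convex, differentiable Young function with G' = g. Then for all a, b ∈ ℝ, (1/2)·(g(|b|)·sgn(b) − g(|a|)·sgn(a))·(b − a) ≥ G(|b|) + G(|a|) − 2·G(|(a + b)/2|). -/
open MeasureTheory Real Set

/-- A Young function `G` with density `g`: `G(t) = ∫₀ᵗ g(r) dr`, where `g` is
right-continuous, non-decreasing on `[0,∞)`, positive on `(0,∞)`, vanishes at `0`
and diverges at infinity. -/
structure IsYoung (G g : ℝ → ℝ) : Prop where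
  g_nonneg : ∀ t, 0 ≤ t → 0 ≤ g t
  g_zero : g 0 = 0
  g_pos : ∀ t, 0 < t → 0 < g t
  g_mono : MonotoneOn g (Set.Ici 0)
  g_rightCont : ∀ t, 0 ≤ t → ContinuousWithinAt g (Set.Ici t) t
  g_tendsto : Filter.Tendsto g Filter.atTop Filter.atTop
  G_eq : ∀ t, 0 ≤ t → G t = ∫ r in (0:ℝ)..t, g r

/-- Condition (L): `g` is differentiable on `(0,∞)` and
`p⁻ - 1 ≤ t g'(t)/g(t) ≤ p⁺ - 1` there, with `1 < p⁻ ≤ p⁺ < ∞`. -/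
def CondL (g : ℝ → ℝ) (pm pp : ℝ) : Prop :=
  1 < pm ∧ pm ≤ pp ∧
    ∀ t : ℝ, 0 < t → DifferentiableAt ℝ g t ∧
      pm - 1 ≤ t * deriv g t / g t ∧ t * deriv g t / g t ≤ pp - 1

theorem young_tangent (G g : ℝ → ℝ)
    (hY : IsYoung G g)
    (hconv : ConvexOn ℝ (Set.Ici 0) G)
    (hdiff : ∀ t : ℝ, 0 < t → HasDerivAt G (g t) t) (s t : ℝ) (hs : 0 ≤ s) (ht : 0 ≤ t) :
    G s + g s * (t - s) ≤ G t := by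
  rcases hs.eq_or_lt with rfl | hs'
  · rw [hY.g_zero, hY.G_eq t ht, hY.G_eq 0 le_rfl, intervalIntegral.integral_same]
    have := intervalIntegral.integral_nonneg (μ := volume) ht (fun u hu => hY.g_nonneg u hu.1)
    linarith
  · rcases lt_trichotomy s t with h | rfl | h
    · have h1 := hconv.le_slope_of_hasDerivAt (mem_Ici.2 hs) (mem_Ici.2 ht) h (hdiff s hs')
      rw [slope_def_field, le_div_iff₀ (by linarith)] at h1
      linarith
    · simp
    · have h1 := hconv.slope_le_of_hasDerivAt (mem_Ici.2 ht) (mem_Ici.2 hs) h (hdiff s hs')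
      rw [slope_def_field, div_le_iff₀ (by linarith)] at h1
      linarith

theorem young_tangent_abs (G g : ℝ → ℝ)
    (hY : IsYoung G g)
    (hconv : ConvexOn ℝ (Set.Ici 0) G)
    (hdiff : ∀ t : ℝ, 0 < t → HasDerivAt G (g t) t) (x y : ℝ) :
    G |x| + g |x| * Real.sign x * (y - x) ≤ G |y| := by
  have h := young_tangent G g hY hconv hdiff |x| |y| (abs_nonneg x) (abs_nonneg y)
  have hg := hY.g_nonneg |x| (abs_nonneg x)
  rcases lt_trichotomy x 0 with hx | rfl | hx
  · rw [Real.sign_of_neg hx]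
    have : -1 * (y - x) ≤ |y| - |x| := by
      rw [abs_of_neg hx]; linarith [neg_le_abs y]
    have := mul_le_mul_of_nonneg_left this hg
    linarith
  · simp only [abs_zero, hY.g_zero] at h ⊢
    linarith
  · rw [Real.sign_of_pos hx]
    have : 1 * (y - x) ≤ |y| - |x| := by
      rw [abs_of_pos hx]; linarith [le_abs_self y]
    have := mul_le_mul_of_nonneg_left this hg
    linarith

/-- Convexity inequality used in Lemma 4.2: for a convex differentiable Young function,
`(1/2)(g(|b|) sgn b − g(|a|) sgn a)(b − a) ≥ G(|b|) + G(|a|) − 2 G(|(a+b)/2|)`. -/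
theorem convexity_inequality (G g : ℝ → ℝ)
    (hY : IsYoung G g)
    (hconv : ConvexOn ℝ (Set.Ici 0) G)
    (hdiff : ∀ t : ℝ, 0 < t → HasDerivAt G (g t) t) :
    ∀ a b : ℝ,
      (1 / 2) * ((g |b| * Real.sign b - g |a| * Real.sign a) * (b - a)) ≥
        G |b| + G |a| - 2 * G |(a + b) / 2| := by
  intro a b
  have h1 := young_tangent_abs G g hY hconv hdiff a ((a + b) / 2)
  have h2 := young_tangent_abs G g hY hconv hdiff b ((a + b) / 2)
  linarith
end

section
/- Let G be a Young function with G' = g such that p⁻ ≤ t·g(t)/G(t) ≤ p⁺ for all t > 0, where 1 < p⁻ ≤ p⁺ < ∞. Let s ∈ (0,1) and let u : ℝⁿ → ℝ be measurable with 0 < [u]_{s,G} < ∞. Then p⁻ ≤ (1 − s)·∬_{ℝⁿ×ℝⁿ} g(|D_s u(x,y)|/[u]_{s,G})·(|D_s u(x,y)|/[u]_{s,G}) dμ ≤ p⁺. -/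
open MeasureTheory Real Set

open scoped ENNReal

/-- The `s`-Hölder quotient `D_s u(x,y) = (u(x) − u(y))/|x − y|^s`. -/
noncomputable def Ds (n : ℕ) (s : ℝ) (u : EuclideanSpace ℝ (Fin n) → ℝ)
    (x y : EuclideanSpace ℝ (Fin n)) : ℝ :=
  (u x - u y) / ‖x - y‖ ^ s

/-- The Gagliardo modular `Φ_{s,G}(u) = (1−s)∬ G(|D_s u|) |x−y|^{−n} dx dy`. -/
noncomputable def fracModular (n : ℕ) (s : ℝ) (G : ℝ → ℝ)
    (u : EuclideanSpace ℝ (Fin n) → ℝ) : ℝ≥0∞ :=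
  ENNReal.ofReal (1 - s) *
    ∫⁻ p : EuclideanSpace ℝ (Fin n) × EuclideanSpace ℝ (Fin n),
      ENNReal.ofReal (G |Ds n s u p.1 p.2| * ‖p.1 - p.2‖ ^ (-(n : ℝ)))

/-- The Gagliardo–Luxemburg seminorm `[u]_{s,G} = inf {τ > 0 : Φ_{s,G}(u/τ) ≤ 1}`. -/
noncomputable def fracSeminorm (n : ℕ) (s : ℝ) (G : ℝ → ℝ)
    (u : EuclideanSpace ℝ (Fin n) → ℝ) : ℝ :=
  sInf {τ : ℝ | 0 < τ ∧ fracModular n s G (fun x => u x / τ) ≤ 1}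

section Helpers

variable {G g : ℝ → ℝ} {pm pp : ℝ}

theorem aux_G_zero (hY : IsYoung G g) : G 0 = 0 := by
  rw [hY.G_eq 0 le_rfl]; simp

theorem aux_G_pos (hY : IsYoung G g) (hpm : 1 < pm)
    (hratio : ∀ t : ℝ, 0 < t → pm ≤ t * g t / G t ∧ t * g t / G t ≤ pp) {t : ℝ} (ht : 0 < t) :
    0 < G t := by
  by_contra h
  push Not at h
  have h1 := (hratio t ht).1
  have h2 : t * g t / G t ≤ 0 :=
    div_nonpos_of_nonneg_of_nonpos (mul_nonneg ht.le (hY.g_nonneg t ht.le)) h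
  linarith

theorem aux_G_nonneg (hY : IsYoung G g) (hpm : 1 < pm)
    (hratio : ∀ t : ℝ, 0 < t → pm ≤ t * g t / G t ∧ t * g t / G t ≤ pp) {t : ℝ} (ht : 0 ≤ t) :
    0 ≤ G t := by
  rcases ht.eq_or_lt with rfl | h
  · rw [aux_G_zero hY]
  · exact (aux_G_pos hY hpm hratio h).le

theorem aux_bounds (hY : IsYoung G g) (hpm : 1 < pm)
    (hratio : ∀ t : ℝ, 0 < t → pm ≤ t * g t / G t ∧ t * g t / G t ≤ pp) {t : ℝ} (ht : 0 ≤ t) :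
    pm * G t ≤ g t * t ∧ g t * t ≤ pp * G t := by
  rcases ht.eq_or_lt with rfl | h
  · simp [aux_G_zero hY]
  · have hG := aux_G_pos hY hpm hratio h
    obtain ⟨h1, h2⟩ := hratio t h
    rw [le_div_iff₀ hG] at h1
    rw [div_le_iff₀ hG] at h2
    constructor <;> linarith

theorem aux_diff (hY : IsYoung G g) {a b : ℝ} (ha : 0 ≤ a) (hab : a ≤ b) :
    G b - G a ≤ (b - a) * g b := by
  have hi : ∀ x y : ℝ, 0 ≤ x → 0 ≤ y → IntervalIntegrable g volume x y := by
    intro x y hx hy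
    apply MonotoneOn.intervalIntegrable
    apply hY.g_mono.mono
    intro z hz
    exact le_trans (le_min hx hy) hz.1
  rw [hY.G_eq a ha, hY.G_eq b (ha.trans hab),
    intervalIntegral.integral_interval_sub_left (hi _ _ le_rfl (ha.trans hab)) (hi _ _ le_rfl ha)]
  have := intervalIntegral.integral_mono_on (μ := volume) hab (hi a b ha (ha.trans hab))
    (intervalIntegrable_const (c := g b))
    (fun x hx => hY.g_mono (ha.trans hx.1) (ha.trans hab) hx.2)
  simpa using this

theorem aux_growth (hY : IsYoung G g) (hpm : 1 < pm)
    (hratio : ∀ t : ℝ, 0 < t → pm ≤ t * g t / G t ∧ t * g t / G t ≤ pp)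
    {d σ τ : ℝ} (hd : 0 ≤ d) (hσ : 0 < σ) (hστ : σ ≤ τ) :
    (1 - pp * (1 - σ / τ)) * G (d / σ) ≤ G (d / τ) := by
  have hτ : 0 < τ := hσ.trans_le hστ
  have h1 := aux_diff hY (a := d / τ) (b := d / σ) (by positivity) (by gcongr)
  have h2 := (aux_bounds hY hpm hratio (t := d / σ) (by positivity)).2
  have h3 : d / σ - d / τ = (1 - σ / τ) * (d / σ) := by field_simp
  have h4 : 0 ≤ 1 - σ / τ := by
    have : σ / τ ≤ 1 := (div_le_one hτ).2 hστ
    linarith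
  rw [h3] at h1
  have h5 := mul_le_mul_of_nonneg_left h2 h4
  nlinarith

theorem aux_modular_eq (n : ℕ) (s : ℝ) (u : EuclideanSpace ℝ (Fin n) → ℝ) {τ : ℝ} (hτ : 0 < τ) :
    fracModular n s G (fun x => u x / τ) = ENNReal.ofReal (1 - s) *
    ∫⁻ p : EuclideanSpace ℝ (Fin n) × EuclideanSpace ℝ (Fin n),
      ENNReal.ofReal (G (|Ds n s u p.1 p.2| / τ) * ‖p.1 - p.2‖ ^ (-(n : ℝ))) := by
  unfold fracModular
  congr 1
  apply lintegral_congr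
  intro p
  have : |Ds n s (fun x => u x / τ) p.1 p.2| = |Ds n s u p.1 p.2| / τ := by
    have h : Ds n s (fun x => u x / τ) p.1 p.2 = Ds n s u p.1 p.2 / τ := by
      unfold Ds; ring
    rw [h, abs_div, abs_of_pos hτ]
  rw [this]

theorem aux_compare (n : ℕ) (s c : ℝ)
    (A B : EuclideanSpace ℝ (Fin n) × EuclideanSpace ℝ (Fin n) → ℝ)
    (hA : ∀ p, 0 ≤ A p) (h : ∀ p, c * A p ≤ B p) :
    ENNReal.ofReal c * (ENNReal.ofReal (1 - s) * ∫⁻ p, ENNReal.ofReal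
      (A p * ‖p.1 - p.2‖ ^ (-(n : ℝ)))) ≤
    ENNReal.ofReal (1 - s) * ∫⁻ p, ENNReal.ofReal (B p * ‖p.1 - p.2‖ ^ (-(n : ℝ))) := by
  rw [mul_left_comm, ← lintegral_const_mul' _ _ ENNReal.ofReal_ne_top]
  gcongr with p
  have hw : 0 ≤ ‖p.1 - p.2‖ ^ (-(n : ℝ)) := by positivity
  rw [← ENNReal.ofReal_mul' (mul_nonneg (hA p) hw), ← mul_assoc]
  exact ENNReal.ofReal_le_ofReal (mul_le_mul_of_nonneg_right (h p) hw)

theorem aux_compare' (n : ℕ) (s c : ℝ) (hc : 0 ≤ c)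
    (A B : EuclideanSpace ℝ (Fin n) × EuclideanSpace ℝ (Fin n) → ℝ)
    (h : ∀ p, B p ≤ c * A p) :
    ENNReal.ofReal (1 - s) * ∫⁻ p, ENNReal.ofReal (B p * ‖p.1 - p.2‖ ^ (-(n : ℝ))) ≤
    ENNReal.ofReal c * (ENNReal.ofReal (1 - s) * ∫⁻ p, ENNReal.ofReal
      (A p * ‖p.1 - p.2‖ ^ (-(n : ℝ)))) := by
  rw [mul_left_comm, ← lintegral_const_mul' (ENNReal.ofReal c) _ ENNReal.ofReal_ne_top]
  gcongr with p
  have hw : 0 ≤ ‖p.1 - p.2‖ ^ (-(n : ℝ)) := by positivity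
  rw [← ENNReal.ofReal_mul hc, ← mul_assoc]
  exact ENNReal.ofReal_le_ofReal (mul_le_mul_of_nonneg_right (h p) hw)

theorem aux_mod_growth (n : ℕ) (s : ℝ) (u : EuclideanSpace ℝ (Fin n) → ℝ)
    (hY : IsYoung G g) (hpm : 1 < pm)
    (hratio : ∀ t : ℝ, 0 < t → pm ≤ t * g t / G t ∧ t * g t / G t ≤ pp)
    {σ τ : ℝ} (hσ : 0 < σ) (hστ : σ ≤ τ) :
    ENNReal.ofReal (1 - pp * (1 - σ / τ)) * fracModular n s G (fun x => u x / σ) ≤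
      fracModular n s G (fun x => u x / τ) := by
  rw [aux_modular_eq n s u hσ, aux_modular_eq n s u (hσ.trans_le hστ)]
  exact aux_compare n s _ (fun p => G (|Ds n s u p.1 p.2| / σ))
    (fun p => G (|Ds n s u p.1 p.2| / τ))
    (fun p => aux_G_nonneg hY hpm hratio (by positivity))
    (fun p => aux_growth hY hpm hratio (abs_nonneg _) hσ hστ)

theorem aux_mod_eq_one (n : ℕ) (s : ℝ) (u : EuclideanSpace ℝ (Fin n) → ℝ)
    (hY : IsYoung G g) (hpm : 1 < pm) (hpmpp : pm ≤ pp)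
    (hratio : ∀ t : ℝ, 0 < t → pm ≤ t * g t / G t ∧ t * g t / G t ≤ pp)
    (hfin : ∃ τ : ℝ, 0 < τ ∧ fracModular n s G (fun x => u x / τ) ≤ 1)
    (hpos : 0 < fracSeminorm n s G u) :
    fracModular n s G (fun x => u x / fracSeminorm n s G u) = 1 := by
  have hbdd : BddBelow {τ : ℝ | 0 < τ ∧ fracModular n s G (fun x => u x / τ) ≤ 1} :=
    ⟨0, fun x hx => hx.1.le⟩
  set l := fracSeminorm n s G u with hl
  apply le_antisymm
  · have ht : Filter.Tendsto (fun τ => ENNReal.ofReal (1 - pp * (1 - l / τ)) *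
        fracModular n s G (fun x => u x / l)) (nhdsWithin l (Ioi l))
        (nhds (1 * fracModular n s G (fun x => u x / l))) := by
      apply ENNReal.Tendsto.mul_const _ (Or.inl one_ne_zero)
      have hc : ContinuousAt (fun τ : ℝ => ENNReal.ofReal (1 - pp * (1 - l / τ))) l := by
        apply ENNReal.continuous_ofReal.continuousAt.comp
        fun_prop (disch := exact hpos.ne')
      have := hc.tendsto
      simp only [div_self hpos.ne', sub_self, mul_zero, sub_zero, ENNReal.ofReal_one] at this
      exact this.mono_left nhdsWithin_le_nhds
    rw [one_mul] at ht
    apply le_of_tendsto ht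
    filter_upwards [self_mem_nhdsWithin] with τ hτ
    obtain ⟨τ', hτ', hlt⟩ := exists_lt_of_csInf_lt hfin (show sInf _ < τ from hτ)
    have hle : l ≤ τ' := csInf_le hbdd hτ'
    refine le_trans ?_ ((aux_mod_growth n s u hY hpm hratio hpos hle).trans hτ'.2)
    have h1 : l / τ ≤ l / τ' := by
      have := hτ'.1
      gcongr
    gcongr
    linarith
  · have hc : ContinuousAt (fun τ : ℝ => ENNReal.ofReal (1 - pp * (1 - τ / l))) l := by
      apply ENNReal.continuous_ofReal.continuousAt.comp
      fun_prop
    have ht := hc.tendsto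
    simp only [div_self hpos.ne', sub_self, mul_zero, sub_zero, ENNReal.ofReal_one] at ht
    apply le_of_tendsto (ht.mono_left (nhdsWithin_le_nhds (s := Iio l)))
    filter_upwards [Ioo_mem_nhdsLT hpos] with τ hτ
    refine le_trans ?_ (aux_mod_growth n s u hY hpm hratio hτ.1 hτ.2.le)
    have h1 : 1 ≤ fracModular n s G (fun x => u x / τ) := by
      by_contra h
      push Not at h
      exact absurd (csInf_le hbdd ⟨hτ.1, h.le⟩) (not_le.2 hτ.2)
    exact le_mul_of_one_le_right' h1

end Helpers

/-- Bounds for the normalized Gagliardo energy of the density: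
`p⁻ ≤ (1−s)∬ g(|D_s u|/[u]_{s,G})(|D_s u|/[u]_{s,G}) dμ ≤ p⁺`. -/
theorem frac_density_modular_bounds (n : ℕ) (G g : ℝ → ℝ) (pm pp : ℝ)
    (hY : IsYoung G g) (hpm : 1 < pm) (hpmpp : pm ≤ pp)
    (hratio : ∀ t : ℝ, 0 < t → pm ≤ t * g t / G t ∧ t * g t / G t ≤ pp)
    (s : ℝ) (hs : s ∈ Set.Ioo (0:ℝ) 1)
    (u : EuclideanSpace ℝ (Fin n) → ℝ) (hu : Measurable u)
    (hfin : ∃ τ : ℝ, 0 < τ ∧ fracModular n s G (fun x => u x / τ) ≤ 1)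
    (hpos : 0 < fracSeminorm n s G u) :
    ENNReal.ofReal pm ≤
      ENNReal.ofReal (1 - s) *
        ∫⁻ p : EuclideanSpace ℝ (Fin n) × EuclideanSpace ℝ (Fin n),
          ENNReal.ofReal (g (|Ds n s u p.1 p.2| / fracSeminorm n s G u) *
            (|Ds n s u p.1 p.2| / fracSeminorm n s G u) * ‖p.1 - p.2‖ ^ (-(n : ℝ))) ∧
    ENNReal.ofReal (1 - s) *
        ∫⁻ p : EuclideanSpace ℝ (Fin n) × EuclideanSpace ℝ (Fin n),
          ENNReal.ofReal (g (|Ds n s u p.1 p.2| / fracSeminorm n s G u) *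
            (|Ds n s u p.1 p.2| / fracSeminorm n s G u) * ‖p.1 - p.2‖ ^ (-(n : ℝ))) ≤
      ENNReal.ofReal pp := by
  have hone := aux_mod_eq_one n s u hY hpm hpmpp hratio hfin hpos
  rw [aux_modular_eq n s u hpos] at hone
  constructor
  · have := aux_compare n s pm
      (fun p => G (|Ds n s u p.1 p.2| / fracSeminorm n s G u))
      (fun p => g (|Ds n s u p.1 p.2| / fracSeminorm n s G u) *
            (|Ds n s u p.1 p.2| / fracSeminorm n s G u))
      (fun p => aux_G_nonneg hY hpm hratio (by positivity))
      (fun p => (aux_bounds hY hpm hratio (by positivity)).1)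
    simpa only [hone, mul_one] using this
  · have := aux_compare' n s pp (by linarith)
      (fun p => G (|Ds n s u p.1 p.2| / fracSeminorm n s G u))
      (fun p => g (|Ds n s u p.1 p.2| / fracSeminorm n s G u) *
            (|Ds n s u p.1 p.2| / fracSeminorm n s G u))
      (fun p => (aux_bounds hY hpm hratio (by positivity)).2)
    simpa only [hone, mul_one] using this
end
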